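/- Let Ω = Ω₁ × ⋯ × Ω_d, where each Ω_i ⊆ ℝ is Lebesgue-measurable of finite Lebesgue measure with (0,1] ⊆ Ω_i, equipped with Lebesgue measure, and let p⃗ = (p₁,…,p_d) with 0 < p_i ≤ ∞ for all i and 0 < min{p₁,…,p_d} < ∞. Then for every ε > 0 the mixed Lebesgue space L_{p⃗}(Ω) is not embedded into L_{min{p₁,…,p_d}+ε}(Ω): there exists a measurable function f on Ω with ‖f‖_{p⃗} < ∞ but whose L_{min{p₁,…,p_d}+ε}(Ω)-norm is infinite. -/

import Mathlib

open MeasureTheory ENNReal Set Filter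

noncomputable section

/-- One-variable `L_p` quasi-norm of an `ℝ≥0∞`-valued function (essential sup if `p = ∞`). -/
def lpNorm1 {α : Type} [MeasurableSpace α] (p : ℝ≥0∞) (μ : Measure α)
    (g : α → ℝ≥0∞) : ℝ≥0∞ :=
  if p = ∞ then essSup g μ else (∫⁻ x, g x ^ p.toReal ∂μ) ^ (1 / p.toReal)

/-- Mixed Lebesgue quasi-norm of an `ℝ≥0∞`-valued function on a product space:
the first coordinate is integrated innermost. -/
def mixedNormE : {d : ℕ} → {α : Fin d → Type} →
    [inst : ∀ i, MeasurableSpace (α i)] → (μ : ∀ i, Measure (α i)) →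
    (p : Fin d → ℝ≥0∞) → ((∀ i, α i) → ℝ≥0∞) → ℝ≥0∞
  | 0, _, _, _, _, f => f finZeroElim
  | (d + 1), α, inst, μ, p, f =>
      @mixedNormE d (fun i => α i.succ) (fun i => inst i.succ)
        (fun i => μ i.succ) (fun i => p i.succ)
        (fun y => lpNorm1 (p 0) (μ 0) fun x => f (Fin.cons x y))

/-- Mixed Lebesgue quasi-norm `‖f‖_{p⃗}` of a real-valued function. -/
def mixedNorm {d : ℕ} {α : Fin d → Type} [∀ i, MeasurableSpace (α i)]
    (μ : ∀ i, Measure (α i)) (p : Fin d → ℝ≥0∞) (f : (∀ i, α i) → ℝ) : ℝ≥0∞ :=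
  mixedNormE μ p fun x => ENNReal.ofReal |f x|

/-- Mixed Lorentz quasi-norm `‖f‖_{L_{p⃗,q}}`. -/
def mixedLorentzNorm {d : ℕ} {α : Fin d → Type} [∀ i, MeasurableSpace (α i)]
    (μ : ∀ i, Measure (α i)) (p : Fin d → ℝ≥0∞) (q : ℝ≥0∞) (f : (∀ i, α i) → ℝ) : ℝ≥0∞ :=
  if q = ∞ then
    ⨆ (u : ℝ) (_ : 0 < u),
      ENNReal.ofReal u * mixedNorm μ p ({x | u < |f x|}.indicator fun _ => (1 : ℝ))
  else
    (∫⁻ u in Set.Ioi (0 : ℝ),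
        (ENNReal.ofReal u * mixedNorm μ p ({x | u < |f x|}.indicator fun _ => (1 : ℝ))) ^ q.toReal
          / ENNReal.ofReal u) ^ (1 / q.toReal)

/-- Non-increasing rearrangement `f^*(t)` (with `inf ∅ = ∞`). -/
def rearr {α : Type} [MeasurableSpace α] (μ : Measure α) (f : α → ℝ) (t : ℝ) : ℝ≥0∞ :=
  sInf {s : ℝ≥0∞ | μ {x | s < ENNReal.ofReal |f x|} ≤ ENNReal.ofReal t}

/-- Growth envelope function of the quasi-normed function space given by the quasi-norm `N`. -/
def growthEnv {α : Type} [MeasurableSpace α] (μ : Measure α)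
    (N : (α → ℝ) → ℝ≥0∞) (t : ℝ) : ℝ≥0∞ :=
  ⨆ (f : α → ℝ) (_ : Measurable f) (_ : N f ≤ 1), rearr μ f t

/-- The Hardy-type functional `( ∫_0^ε ( t^{pinv} f^*(t) )^v dt/t )^{1/v}`,
with the usual `sup` modification for `v = ∞`. -/
def hardy {α : Type} [MeasurableSpace α] (μ : Measure α)
    (pinv : ℝ) (v : ℝ≥0∞) (ε : ℝ) (f : α → ℝ) : ℝ≥0∞ :=
  if v = ∞ then ⨆ (t : ℝ) (_ : t ∈ Set.Ioo 0 ε), ENNReal.ofReal t ^ pinv * rearr μ f t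
  else
    (∫⁻ t in Set.Ioo (0 : ℝ) ε,
        (ENNReal.ofReal t ^ pinv * rearr μ f t) ^ v.toReal / ENNReal.ofReal t) ^ (1 / v.toReal)

/-- The modular `ϱ_{p(·)}(f) = ∫ |f(x)|^{p(x)} dμ(x)`. -/
def varModular {α : Type} [MeasurableSpace α] (μ : Measure α)
    (p : α → ℝ) (f : α → ℝ) : ℝ≥0∞ :=
  ∫⁻ x, ENNReal.ofReal (|f x| ^ p x) ∂μ

/-- The variable Lebesgue quasi-norm `‖f‖_{p(·)}`. -/
def varNorm {α : Type} [MeasurableSpace α] (μ : Measure α)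
    (p : α → ℝ) (f : α → ℝ) : ℝ≥0∞ :=
  ⨅ (l : ℝ) (_ : 0 < l) (_ : varModular μ p (fun x => f x / l) ≤ 1), ENNReal.ofReal l

/-- The variable Lorentz quasi-norm `‖f‖_{L_{p(·),q}}`. -/
def varLorentzNorm {α : Type} [MeasurableSpace α] (μ : Measure α)
    (p : α → ℝ) (q : ℝ≥0∞) (f : α → ℝ) : ℝ≥0∞ :=
  if q = ∞ then
    ⨆ (u : ℝ) (_ : 0 < u),
      ENNReal.ofReal u * varNorm μ p ({x | u < |f x|}.indicator fun _ => (1 : ℝ))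
  else
    (∫⁻ u in Set.Ioi (0 : ℝ),
        (ENNReal.ofReal u * varNorm μ p ({x | u < |f x|}.indicator fun _ => (1 : ℝ))) ^ q.toReal
          / ENNReal.ofReal u) ^ (1 / q.toReal)

/-- Local log-Hölder continuity at a point `x₀`. -/
def LocLogHolderAt {E : Type} [PseudoMetricSpace E] (p : E → ℝ) (x₀ : E) : Prop :=
  ∃ C₀ > (0 : ℝ), ∀ x, dist x x₀ < 1 / 2 → |p x - p x₀| ≤ C₀ / (-Real.log (dist x x₀))

/-- Local log-Hölder continuity (at every point, with a uniform constant). -/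
def LocLogHolder {E : Type} [PseudoMetricSpace E] (p : E → ℝ) : Prop :=
  ∃ C₀ > (0 : ℝ), ∀ x y, dist x y < 1 / 2 → |p x - p y| ≤ C₀ / (-Real.log (dist x y))

end

/-! A tensor product `∏ i, g i (x i)` has mixed norm `∏ i, ‖g i‖_{p i}`, and for the constant
exponent `(q, …, q)` the mixed norm is the `L_q` norm of the product measure. So it suffices to find
one coordinate `k` and a function `g k` in `L_{p k}` but not in `L_q`; the other factors may be
indicators of sets of positive finite measure. For `p < q`, such a `g` exists as soon as there are
sets `s` of arbitrarily small positive measure: for `1 / q < a < 1 / p` the functions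
`μ(s) ^ (-a) * 1_s` are small in `L_p` and large in `L_q`, and a supremum of countably many of them
lies in `L_p` without lying in `L_q`. -/

section OneVariable

variable {α : Type*} [MeasurableSpace α] {μ : Measure α} {p q : ℝ≥0∞}

/-- The measure `μ` takes arbitrarily small positive values; on a `σ`-finite space this is what
rules out the inclusion of `L_p` in `L_q` for `p < q`. -/
def HasSmallSets (μ : Measure α) : Prop :=
  ∀ δ : ℝ≥0∞, 0 < δ → ∃ s, MeasurableSet s ∧ 0 < μ s ∧ μ s < δ

theorem HasSmallSets.ne_zero (hμ : HasSmallSets μ) : μ ≠ 0 := by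
  rintro rfl
  obtain ⟨s, -, hs, -⟩ := hμ 1 one_pos
  simp at hs

theorem hasSmallSets_volume_restrict {Ω : Set ℝ} (hΩ : Ioc 0 1 ⊆ Ω) :
    HasSmallSets (volume.restrict Ω) := by
  intro δ hδ
  obtain ⟨t, ht, htδ⟩ := ENNReal.lt_iff_exists_nnreal_btwn.1 (lt_min hδ one_pos)
  obtain ⟨htδ, ht1⟩ := lt_min_iff.1 htδ
  have ht1 : (t : ℝ) ≤ 1 := mod_cast ht1.le
  have hvol : volume.restrict Ω (Ioc 0 (t : ℝ)) = t := by
    rw [Measure.restrict_apply measurableSet_Ioc,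
      inter_eq_left.2 ((Ioc_subset_Ioc_right ht1).trans hΩ), Real.volume_Ioc, sub_zero,
      ENNReal.ofReal_coe_nnreal]
  exact ⟨Ioc 0 (t : ℝ), measurableSet_Ioc, hvol ▸ ht, hvol ▸ htδ⟩

theorem one_div_toReal_lt_one_div_toReal (hp : p ≠ 0) (hpq : p < q) :
    1 / q.toReal < 1 / p.toReal := by
  have hp_pos : 0 < p.toReal := ENNReal.toReal_pos hp hpq.ne_top
  rcases eq_or_ne q ∞ with rfl | hq
  · simpa using hp_pos
  · exact one_div_lt_one_div_of_lt hp_pos (ENNReal.toReal_strict_mono hq hpq)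

theorem HasSmallSets.exists_eLpNorm_lt_and_lt_eLpNorm (hμ : HasSmallSets μ) (hp : p ≠ 0)
    (hpq : p < q) {δ M : ℝ≥0∞} (hδ : 0 < δ) (hM : M < ∞) :
    ∃ h : α → ℝ, Measurable h ∧ eLpNorm h p μ < δ ∧ M < eLpNorm h q μ := by
  obtain ⟨a, hqa, hap⟩ := exists_between (one_div_toReal_lt_one_div_toReal hp hpq)
  have hsmall : ∀ᶠ t : ℝ≥0∞ in nhds 0, t ^ (-a + 1 / p.toReal) < δ := by
    have hpos : 0 < -a + 1 / p.toReal := by linarith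
    exact ENNReal.continuous_rpow_const.continuousAt.eventually_lt_const <| by
      simpa only [ENNReal.zero_rpow_of_pos hpos] using hδ
  have hlarge : ∀ᶠ t : ℝ≥0∞ in nhds 0, M < t ^ (-a + 1 / q.toReal) := by
    have hneg : -a + 1 / q.toReal < 0 := by linarith
    exact ENNReal.continuous_rpow_const.continuousAt.eventually_const_lt <| by
      simpa only [ENNReal.zero_rpow_of_neg hneg] using hM
  obtain ⟨η, hη, hgood⟩ := ENNReal.nhds_zero_basis.eventually_iff.1 (hsmall.and hlarge)
  obtain ⟨s, hs, hs_pos, hsη⟩ := hμ η hη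
  have hs_top : μ s ≠ ∞ := hsη.ne_top
  have hnorm : ∀ r : ℝ≥0∞, r ≠ 0 →
      eLpNorm (s.indicator fun _ => (μ s ^ (-a)).toReal) r μ = μ s ^ (-a + 1 / r.toReal) := by
    intro r hr
    rw [eLpNorm_indicator_const' hs hs_pos.ne' hr, Real.enorm_of_nonneg ENNReal.toReal_nonneg,
      ENNReal.ofReal_toReal (ENNReal.rpow_ne_top_of_ne_zero hs_pos.ne' hs_top),
      ENNReal.rpow_add _ _ hs_pos.ne' hs_top]
  obtain ⟨hlt, hgt⟩ := hgood hsη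
  exact ⟨_, measurable_const.indicator hs, (hnorm p hp).trans_lt hlt,
    hgt.trans_eq (hnorm q hpq.ne_bot).symm⟩

theorem lintegral_iSup_rpow_le_tsum {ι : Type*} [Countable ι] {f : ι → α → ℝ≥0∞}
    (hf : ∀ i, AEMeasurable (f i) μ) {r : ℝ} (hr : 0 < r) :
    ∫⁻ x, (⨆ i, f i x) ^ r ∂μ ≤ ∑' i, ∫⁻ x, f i x ^ r ∂μ := by
  rw [← lintegral_tsum fun i => (hf i).pow_const r]
  refine lintegral_mono fun x => (ENNReal.le_rpow_inv_iff hr).1 (iSup_le fun i => ?_)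
  exact (ENNReal.le_rpow_inv_iff hr).2 (ENNReal.le_tsum i)

theorem exists_eLpNorm_lt_top_eLpNorm_eq_top_of_unbounded (hp : p ≠ 0) (hp_top : p ≠ ∞)
    (h : ∀ δ M : ℝ≥0∞, 0 < δ → M < ∞ →
      ∃ f : α → ℝ, Measurable f ∧ eLpNorm f p μ < δ ∧ M < eLpNorm f q μ) :
    ∃ g : α → ℝ, Measurable g ∧ eLpNorm g p μ < ∞ ∧ eLpNorm g q μ = ∞ := by
  have hp_pos : 0 < p.toReal := ENNReal.toReal_pos hp hp_top
  obtain ⟨w, hw_pos, hw_sum⟩ := ENNReal.exists_pos_sum_of_countable' one_ne_zero ℕ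
  choose f hf hfp hfq using fun n : ℕ =>
    h (w n ^ (1 / p.toReal)) n (ENNReal.rpow_pos_of_nonneg (hw_pos n) (by positivity))
      (ENNReal.natCast_lt_top n)
  set G : α → ℝ≥0∞ := fun x => ⨆ n, ‖f n x‖ₑ
  have hG : Measurable G := .iSup fun n => (hf n).enorm
  have hfw : ∀ n, ∫⁻ x, ‖f n x‖ₑ ^ p.toReal ∂μ ≤ w n := fun n => by
    have := hfp n
    rw [eLpNorm_eq_lintegral_rpow_enorm_toReal hp hp_top,
      ENNReal.rpow_lt_rpow_iff (by positivity)] at this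
    exact this.le
  have hG_int : ∫⁻ x, G x ^ p.toReal ∂μ < ∞ :=
    calc ∫⁻ x, G x ^ p.toReal ∂μ
        ≤ ∑' n, ∫⁻ x, ‖f n x‖ₑ ^ p.toReal ∂μ :=
          lintegral_iSup_rpow_le_tsum (fun n => (hf n).enorm.aemeasurable) hp_pos
      _ ≤ ∑' n, w n := ENNReal.tsum_le_tsum hfw
      _ < ∞ := hw_sum.trans one_lt_top
  have hG_enorm : ∀ᵐ x ∂μ, ‖(G x).toReal‖ₑ = G x := by
    filter_upwards [ae_lt_top (hG.pow_const _) hG_int.ne] with x hx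
    rw [Real.enorm_of_nonneg ENNReal.toReal_nonneg, ENNReal.ofReal_toReal]
    exact ((ENNReal.rpow_lt_top_iff_of_pos hp_pos).1 hx).ne
  refine ⟨fun x => (G x).toReal, hG.ennreal_toReal, ?_, ?_⟩
  · rw [eLpNorm_congr_enorm_ae (g := G) hG_enorm, eLpNorm_eq_lintegral_rpow_enorm_toReal hp hp_top]
    exact ENNReal.rpow_lt_top_of_nonneg (by positivity) hG_int.ne
  · refine ENNReal.eq_top_of_forall_nnreal_le fun M => ?_
    obtain ⟨n, hMn⟩ := exists_nat_ge M
    calc (M : ℝ≥0∞) ≤ n := mod_cast hMn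
      _ ≤ eLpNorm (f n) q μ := (hfq n).le
      _ ≤ eLpNorm (fun x => (G x).toReal) q μ := eLpNorm_mono_enorm_ae <| by
          filter_upwards [hG_enorm] with x hx
          exact hx.symm ▸ le_iSup (fun n => ‖f n x‖ₑ) n

theorem HasSmallSets.exists_eLpNorm_lt_top_eLpNorm_eq_top (hμ : HasSmallSets μ) (hp : p ≠ 0)
    (hpq : p < q) :
    ∃ g : α → ℝ, Measurable g ∧ eLpNorm g p μ < ∞ ∧ eLpNorm g q μ = ∞ :=
  exists_eLpNorm_lt_top_eLpNorm_eq_top_of_unbounded hp hpq.ne_top fun _ _ hδ hM =>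
    hμ.exists_eLpNorm_lt_and_lt_eLpNorm hp hpq hδ hM

theorem exists_forall_eLpNorm_pos_lt_top [SigmaFinite μ] (hμ : μ ≠ 0) :
    ∃ g : α → ℝ, Measurable g ∧ ∀ r : ℝ≥0∞, r ≠ 0 → 0 < eLpNorm g r μ ∧ eLpNorm g r μ < ∞ := by
  obtain ⟨s, hs, -, hs_pos, hs_top⟩ := Measure.exists_subset_measure_lt_top (r := 0)
    MeasurableSet.univ (Measure.measure_univ_pos.2 hμ)
  refine ⟨s.indicator fun _ => 1, measurable_const.indicator hs, fun r hr => ?_⟩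
  rw [eLpNorm_indicator_const' hs hs_pos.ne' hr, enorm_one, one_mul]
  exact ⟨ENNReal.rpow_pos hs_pos hs_top.ne,
    ENNReal.rpow_lt_top_of_nonneg (by positivity) hs_top.ne⟩

end OneVariable

section FinProduct

variable {d : ℕ} {α : Fin (d + 1) → Type*} [∀ i, MeasurableSpace (α i)]

theorem measurable_fin_cons :
    Measurable fun z : α 0 × (∀ i : Fin d, α i.succ) => (Fin.cons z.1 z.2 : ∀ i, α i) := by
  refine measurable_pi_iff.2 (Fin.cases ?_ fun i => ?_)
  · simpa only [Fin.cons_zero] using measurable_fst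
  · simp only [Fin.cons_succ]
    fun_prop

theorem lintegral_pi_fin_succ (μ : ∀ i, Measure (α i)) [∀ i, SigmaFinite (μ i)]
    {f : (∀ i, α i) → ℝ≥0∞} (hf : Measurable f) :
    ∫⁻ x, f x ∂Measure.pi μ
      = ∫⁻ y, ∫⁻ x, f (Fin.cons x y) ∂μ 0 ∂Measure.pi fun i => μ i.succ :=
  calc ∫⁻ x, f x ∂Measure.pi μ
      = ∫⁻ z, f (Fin.cons z.1 z.2) ∂(μ 0).prod (Measure.pi fun i => μ i.succ) := by
        rw [← (measurePreserving_piFinSuccAbove μ 0).symm.lintegral_comp hf]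
        simp only [MeasurableEquiv.piFinSuccAbove_symm_apply, Fin.insertNthEquiv_zero]
        rfl
    _ = ∫⁻ y, ∫⁻ x, f (Fin.cons x y) ∂μ 0 ∂Measure.pi fun i => μ i.succ :=
        lintegral_prod_symm' _ (hf.comp measurable_fin_cons)

end FinProduct

section MixedNorm

theorem lpNorm1_eq_eLpNorm {α : Type} [MeasurableSpace α] {μ : Measure α} {p : ℝ≥0∞} (hp : p ≠ 0)
    (g : α → ℝ≥0∞) : lpNorm1 p μ g = eLpNorm g p μ := by
  unfold lpNorm1
  split_ifs with h
  · simp [h, eLpNormEssSup_eq_essSup_enorm]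
  · simp [eLpNorm_eq_lintegral_rpow_enorm_toReal hp h]

theorem lpNorm1_const_mul {α : Type} [MeasurableSpace α] {μ : Measure α} {p : ℝ≥0∞} (hp : p ≠ 0)
    (c : ℝ≥0∞) {g : α → ℝ≥0∞} (hg : Measurable g) :
    lpNorm1 p μ (fun x => c * g x) = c * lpNorm1 p μ g := by
  unfold lpNorm1
  split_ifs with h
  · exact ENNReal.essSup_const_mul
  · have hp_pos : 0 < p.toReal := ENNReal.toReal_pos hp h
    simp_rw [ENNReal.mul_rpow_of_nonneg _ _ hp_pos.le]
    rw [lintegral_const_mul _ (hg.pow_const _), ENNReal.mul_rpow_of_nonneg _ _ (by positivity),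
      one_div, ENNReal.rpow_rpow_inv hp_pos.ne']

theorem mixedNormE_const_mul_prod {d : ℕ} {α : Fin d → Type} [∀ i, MeasurableSpace (α i)]
    {μ : ∀ i, Measure (α i)} {p : Fin d → ℝ≥0∞} (hp : ∀ i, p i ≠ 0) (c : ℝ≥0∞)
    {g : ∀ i, α i → ℝ≥0∞} (hg : ∀ i, Measurable (g i)) :
    mixedNormE μ p (fun x => c * ∏ i, g i (x i)) = c * ∏ i, lpNorm1 (p i) (μ i) (g i) := by
  induction d generalizing c with
  | zero => simp [mixedNormE]
  | succ d ih =>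
    have hinner : ∀ y : ∀ i : Fin d, α i.succ,
        lpNorm1 (p 0) (μ 0) (fun x => c * ∏ i, g i (Fin.cons (α := α) x y i))
          = c * lpNorm1 (p 0) (μ 0) (g 0) * ∏ i, g i.succ (y i) := fun y => by
      simp only [Fin.prod_univ_succ, Fin.cons_zero, Fin.cons_succ]
      rw [mul_right_comm, ← lpNorm1_const_mul (hp 0) _ (hg 0)]
      simp only [mul_comm, mul_left_comm]
    simp only [mixedNormE, hinner]
    rw [ih (fun i => hp i.succ) _ fun i => hg i.succ, Fin.prod_univ_succ, mul_assoc]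

theorem mixedNormE_const_exponent {d : ℕ} {α : Fin d → Type} [∀ i, MeasurableSpace (α i)]
    (μ : ∀ i, Measure (α i)) [∀ i, SigmaFinite (μ i)] {q : ℝ≥0∞} (hq : q ≠ 0) (hq_top : q ≠ ∞)
    {f : (∀ i, α i) → ℝ≥0∞} (hf : Measurable f) :
    mixedNormE μ (fun _ => q) f = lpNorm1 q (Measure.pi μ) f := by
  have hq_pos : 0 < q.toReal := ENNReal.toReal_pos hq hq_top
  induction d with
  | zero =>
    have hconst : f = fun _ => f finZeroElim := funext fun x => congrArg f (Subsingleton.elim _ _)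
    rw [hconst, lpNorm1_eq_eLpNorm hq, eLpNorm_const' _ hq hq_top]
    simp [mixedNormE]
  | succ d ih =>
    have hcons : Measurable fun z : α 0 × (∀ i : Fin d, α i.succ) => f (Fin.cons z.1 z.2) :=
      hf.comp measurable_fin_cons
    have hinner : Measurable fun y : ∀ i : Fin d, α i.succ =>
        lpNorm1 q (μ 0) fun x => f (Fin.cons x y) := by
      simp only [lpNorm1, if_neg hq_top]
      exact (hcons.pow_const _).lintegral_prod_left'.pow_const _
    simp only [mixedNormE]
    rw [ih (fun i => μ i.succ) hinner]
    simp only [lpNorm1, if_neg hq_top, one_div, ENNReal.rpow_inv_rpow hq_pos.ne']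
    rw [lintegral_pi_fin_succ μ (hf.pow_const _)]

variable {d : ℕ} {α : Fin d → Type} [∀ i, MeasurableSpace (α i)] {μ : ∀ i, Measure (α i)}
  {p : Fin d → ℝ≥0∞} {q : ℝ≥0∞}

theorem mixedNorm_prod (hp : ∀ i, p i ≠ 0) {g : ∀ i, α i → ℝ} (hg : ∀ i, Measurable (g i)) :
    mixedNorm μ p (fun x => ∏ i, g i (x i)) = ∏ i, eLpNorm (g i) (p i) (μ i) := by
  have h := mixedNormE_const_mul_prod (μ := μ) hp 1 fun i => (hg i).enorm
  simp only [one_mul, lpNorm1_eq_eLpNorm (hp _), eLpNorm_enorm] at h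
  rw [← h, mixedNorm]
  congr! with x
  simp only [Real.enorm_eq_ofReal_abs, Finset.abs_prod]
  exact ENNReal.ofReal_prod_of_nonneg fun i _ => abs_nonneg _

theorem mixedNorm_const_exponent [∀ i, SigmaFinite (μ i)] (hq : q ≠ 0) (hq_top : q ≠ ∞)
    {f : (∀ i, α i) → ℝ} (hf : Measurable f) :
    mixedNorm μ (fun _ => q) f = eLpNorm f q (Measure.pi μ) := by
  simp only [mixedNorm, ← Real.enorm_eq_ofReal_abs]
  rw [mixedNormE_const_exponent μ hq hq_top hf.enorm, lpNorm1_eq_eLpNorm hq, eLpNorm_enorm]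

theorem statement0_general [∀ i, SigmaFinite (μ i)] (hμ : ∀ i, μ i ≠ 0) (hp : ∀ i, p i ≠ 0)
    {k : Fin d} (hk : HasSmallSets (μ k)) (hpq : p k < q) (hq : q ≠ ∞) :
    ∃ f : (∀ i, α i) → ℝ, Measurable f ∧ mixedNorm μ p f < ∞ ∧
      eLpNorm f q (Measure.pi μ) = ∞ := by
  have hq0 : q ≠ 0 := hpq.ne_bot
  have hfactor : ∀ i, ∃ g : α i → ℝ, Measurable g ∧ eLpNorm g (p i) (μ i) < ∞ ∧
      eLpNorm g q (μ i) ≠ 0 ∧ (i = k → eLpNorm g q (μ i) = ∞) := by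
    intro i
    rcases eq_or_ne i k with rfl | hik
    · obtain ⟨g, hg, hgp, hgq⟩ := hk.exists_eLpNorm_lt_top_eLpNorm_eq_top (hp i) hpq
      exact ⟨g, hg, hgp, hgq ▸ top_ne_zero, fun _ => hgq⟩
    · obtain ⟨g, hg, hgr⟩ := exists_forall_eLpNorm_pos_lt_top (hμ i)
      exact ⟨g, hg, (hgr _ (hp i)).2, (hgr q hq0).1.ne', fun h => absurd h hik⟩
  choose g hg hgp hgq0 hgk using hfactor
  have hf : Measurable fun x : ∀ i, α i => ∏ i, g i (x i) := by fun_prop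
  refine ⟨_, hf, ?_, ?_⟩
  · rw [mixedNorm_prod hp hg]
    exact ENNReal.prod_lt_top fun i _ => hgp i
  · rw [← mixedNorm_const_exponent hq0 hq hf, mixedNorm_prod (fun _ => hq0) hg,
      ← Finset.mul_prod_erase _ _ (Finset.mem_univ k), hgk k rfl]
    exact ENNReal.top_mul (Finset.prod_ne_zero_iff.2 fun i _ => hgq0 i)

end MixedNorm

/-- If `Ω = Ω₁ × ⋯ × Ω_d` with each `Ω_i ⊆ ℝ` measurable of finite measure
containing `(0,1]`, and `0 < min{p₁,…,p_d} < ∞`, then for every `ε > 0` the mixed Lebesgue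
space `L_{p⃗}(Ω)` is not embedded into `L_{min{p₁,…,p_d}+ε}(Ω)`. -/
theorem statement0 (d : ℕ) (hd : 0 < d) (Ω : Fin d → Set ℝ)
    (hΩmeas : ∀ i, MeasurableSet (Ω i)) (hΩfin : ∀ i, volume (Ω i) < ∞)
    (hΩsub : ∀ i, Set.Ioc (0 : ℝ) 1 ⊆ Ω i)
    (p : Fin d → ℝ≥0∞) (hp : ∀ i, 0 < p i)
    (hminpos : 0 < ⨅ i, p i) (hminfin : ⨅ i, p i < ∞)
    (ε : ℝ) (hε : 0 < ε) :
    ∃ f : (Fin d → ℝ) → ℝ, Measurable f ∧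
      mixedNorm (fun i => volume.restrict (Ω i)) p f < ∞ ∧
      eLpNorm f ((⨅ i, p i) + ENNReal.ofReal ε)
        (Measure.pi fun i => volume.restrict (Ω i)) = ∞ := by
  have hΩ : ∀ i, HasSmallSets (volume.restrict (Ω i)) := fun i =>
    hasSmallSets_volume_restrict (hΩsub i)
  obtain ⟨k, hk⟩ := iInf_lt_iff.1 (ENNReal.lt_add_right hminfin.ne (ENNReal.ofReal_pos.2 hε).ne')
  exact statement0_general (fun i => (hΩ i).ne_zero) (fun i => (hp i).ne') (hΩ k) hk
    (ENNReal.add_ne_top.2 ⟨hminfin.ne, ENNReal.ofReal_ne_top⟩)
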